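/- Let S be a topological semigroup with identity and suppose there is a family {S_α}_{α∈I} of subsemigroups of S, each containing the identity of S, such that: (i) the union ⋃_{α∈I} S_α is dense in S; (ii) each S_α (with the subspace topology) is an amenable topological semigroup; (iii) for any α₁, α₂ ∈ I there exists α₃ ∈ I with S_{α₁} ∪ S_{α₂} ⊆ S_{α₃}. Then S is amenable. -/

import Mathlib

open BoundedContinuousFunction MeasureTheory Filter Topology

noncomputable section

namespace Paper

variable {S : Type*} [Semigroup S] [TopologicalSpace S] [ContinuousMul S]

/-- Left translate: `(f·s)(t) = f (s * t)`. -/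
def lTrans (f : S →ᵇ ℝ) (s : S) : S →ᵇ ℝ :=
  f.compContinuous ⟨fun t => s * t, continuous_mul_left s⟩

/-- Right translate: `(s·f)(t) = f (t * s)`. -/
def rTrans (f : S →ᵇ ℝ) (s : S) : S →ᵇ ℝ :=
  f.compContinuous ⟨fun t => t * s, continuous_mul_right s⟩

@[simp] lemma lTrans_apply (f : S →ᵇ ℝ) (s t : S) : lTrans f s t = f (s * t) := rfl
@[simp] lemma rTrans_apply (f : S →ᵇ ℝ) (s t : S) : rTrans f s t = f (t * s) := rfl

variable (S) in
/-- The space of left uniformly continuous bounded functions on `S`. -/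
def LUC : Submodule ℝ (S →ᵇ ℝ) where
  carrier := {f | Continuous fun s => lTrans f s}
  add_mem' {f g} hf hg := by
    show Continuous fun s => lTrans (f + g) s
    have h : (fun s => lTrans (f + g) s) = fun s => lTrans f s + lTrans g s := by
      funext s; ext t; simp
    rw [h]; exact Continuous.add hf hg
  zero_mem' := by
    show Continuous fun s : S => lTrans (0 : S →ᵇ ℝ) s
    have h : (fun s : S => lTrans (0 : S →ᵇ ℝ) s) = fun _ => (0 : S →ᵇ ℝ) := by
      funext s; ext t; simp
    rw [h]; exact continuous_const
  smul_mem' r f hf := by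
    show Continuous fun s => lTrans (r • f) s
    have h : (fun s => lTrans (r • f) s) = fun s => r • lTrans f s := by
      funext s; ext t; simp
    rw [h]; exact Continuous.const_smul hf r

variable (S) in
/-- The space of right uniformly continuous bounded functions on `S`. -/
def RUC : Submodule ℝ (S →ᵇ ℝ) where
  carrier := {f | Continuous fun s => rTrans f s}
  add_mem' {f g} hf hg := by
    show Continuous fun s => rTrans (f + g) s
    have h : (fun s => rTrans (f + g) s) = fun s => rTrans f s + rTrans g s := by
      funext s; ext t; simp
    rw [h]; exact Continuous.add hf hg
  zero_mem' := by
    show Continuous fun s : S => rTrans (0 : S →ᵇ ℝ) s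
    have h : (fun s : S => rTrans (0 : S →ᵇ ℝ) s) = fun _ => (0 : S →ᵇ ℝ) := by
      funext s; ext t; simp
    rw [h]; exact continuous_const
  smul_mem' r f hf := by
    show Continuous fun s => rTrans (r • f) s
    have h : (fun s => rTrans (r • f) s) = fun s => r • rTrans f s := by
      funext s; ext t; simp
    rw [h]; exact Continuous.const_smul hf r

lemma mem_LUC_iff {f : S →ᵇ ℝ} : f ∈ LUC S ↔ Continuous fun s => lTrans f s := Iff.rfl

lemma mem_RUC_iff {f : S →ᵇ ℝ} : f ∈ RUC S ↔ Continuous fun s => rTrans f s := Iff.rfl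

lemma one_mem_LUC : (1 : S →ᵇ ℝ) ∈ LUC S := by
  rw [mem_LUC_iff]
  have h : (fun s : S => lTrans (1 : S →ᵇ ℝ) s) = fun _ => (1 : S →ᵇ ℝ) := by
    funext s; ext t; simp
  rw [h]; exact continuous_const

lemma one_mem_RUC : (1 : S →ᵇ ℝ) ∈ RUC S := by
  rw [mem_RUC_iff]
  have h : (fun s : S => rTrans (1 : S →ᵇ ℝ) s) = fun _ => (1 : S →ᵇ ℝ) := by
    funext s; ext t; simp
  rw [h]; exact continuous_const

lemma mul_mem_LUC {f g : S →ᵇ ℝ} (hf : f ∈ LUC S) (hg : g ∈ LUC S) : f * g ∈ LUC S := by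
  rw [mem_LUC_iff] at *
  have h : (fun s => lTrans (f * g) s) = fun s => lTrans f s * lTrans g s := by
    funext s; ext t; simp
  rw [h]; exact Continuous.mul hf hg

lemma mul_mem_RUC {f g : S →ᵇ ℝ} (hf : f ∈ RUC S) (hg : g ∈ RUC S) : f * g ∈ RUC S := by
  rw [mem_RUC_iff] at *
  have h : (fun s => rTrans (f * g) s) = fun s => rTrans f s * rTrans g s := by
    funext s; ext t; simp
  rw [h]; exact Continuous.mul hf hg

lemma lTrans_mem {f : S →ᵇ ℝ} (hf : f ∈ LUC S) (s : S) : lTrans f s ∈ LUC S := by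
  rw [mem_LUC_iff] at *
  have h : (fun t => lTrans (lTrans f s) t) = fun t => lTrans f (s * t) := by
    funext t; ext u; simp [mul_assoc]
  rw [h]; exact hf.comp (continuous_mul_left s)

lemma rTrans_mem {f : S →ᵇ ℝ} (hf : f ∈ RUC S) (s : S) : rTrans f s ∈ RUC S := by
  rw [mem_RUC_iff] at *
  have h : (fun t => rTrans (rTrans f s) t) = fun t => rTrans f (t * s) := by
    funext t; ext u; simp [mul_assoc]
  rw [h]; exact hf.comp (continuous_mul_right s)

variable (S) in
/-- `I` is a left invariant mean on `LUC S`. -/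
def IsLeftInvariantMean (I : LUC S →ₗ[ℝ] ℝ) : Prop :=
  I ⟨1, one_mem_LUC⟩ = 1 ∧
  (∀ f : LUC S, 0 ≤ (f : S →ᵇ ℝ) → 0 ≤ I f) ∧
  ∀ (f : S →ᵇ ℝ) (hf : f ∈ LUC S) (s : S),
    I ⟨lTrans f s, lTrans_mem hf s⟩ = I ⟨f, hf⟩

variable (S) in
/-- `I` is a right invariant mean on `RUC S`. -/
def IsRightInvariantMean (I : RUC S →ₗ[ℝ] ℝ) : Prop :=
  I ⟨1, one_mem_RUC⟩ = 1 ∧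
  (∀ f : RUC S, 0 ≤ (f : S →ᵇ ℝ) → 0 ≤ I f) ∧
  ∀ (f : S →ᵇ ℝ) (hf : f ∈ RUC S) (s : S),
    I ⟨rTrans f s, rTrans_mem hf s⟩ = I ⟨f, hf⟩

variable (S) in
def LeftAmenable : Prop := ∃ I : LUC S →ₗ[ℝ] ℝ, IsLeftInvariantMean S I

variable (S) in
def RightAmenable : Prop := ∃ I : RUC S →ₗ[ℝ] ℝ, IsRightInvariantMean S I

variable (S) in
/-- A topological semigroup is amenable if `LUC` admits a left invariant mean and
`RUC` admits a right invariant mean. -/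
def Amenable : Prop := LeftAmenable S ∧ RightAmenable S

variable (S) in
/-- `I` is a multiplicative left invariant mean on `LUC S`. -/
def IsMultLeftInvariantMean (I : LUC S →ₗ[ℝ] ℝ) : Prop :=
  IsLeftInvariantMean S I ∧
  ∀ (f g : S →ᵇ ℝ) (hf : f ∈ LUC S) (hg : g ∈ LUC S),
    I ⟨f * g, mul_mem_LUC hf hg⟩ = I ⟨f, hf⟩ * I ⟨g, hg⟩

variable (S) in
def IsMultRightInvariantMean (I : RUC S →ₗ[ℝ] ℝ) : Prop :=
  IsRightInvariantMean S I ∧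
  ∀ (f g : S →ᵇ ℝ) (hf : f ∈ RUC S) (hg : g ∈ RUC S),
    I ⟨f * g, mul_mem_RUC hf hg⟩ = I ⟨f, hf⟩ * I ⟨g, hg⟩

variable (S) in
def ExtremelyLeftAmenable : Prop := ∃ I : LUC S →ₗ[ℝ] ℝ, IsMultLeftInvariantMean S I

variable (S) in
def ExtremelyRightAmenable : Prop := ∃ I : RUC S →ₗ[ℝ] ℝ, IsMultRightInvariantMean S I

variable (S) in
def ExtremelyAmenable : Prop := ExtremelyLeftAmenable S ∧ ExtremelyRightAmenable S


lemma limit_mean {X : Type*} [TopologicalSpace X] {ι : Type*} [Nonempty ι]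
    (V : Submodule ℝ (X →ᵇ ℝ)) (h1 : (1 : X →ᵇ ℝ) ∈ V) (T : X → V → V)
    (hT : ∀ f, Continuous fun s => T s f) (A : ι → Set X)
    (hdense : Dense (⋃ α, A α))
    (hdir : ∀ α₁ α₂, ∃ α₃, A α₁ ∪ A α₂ ⊆ A α₃)
    (J : ι → V →ₗ[ℝ] ℝ) (hJ1 : ∀ α, J α ⟨1, h1⟩ = 1)
    (hJp : ∀ α (f : V), 0 ≤ (f : X →ᵇ ℝ) → 0 ≤ J α f)
    (hJi : ∀ α (f : V), ∀ s ∈ A α, J α (T s f) = J α f) :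
    ∃ K : V →ₗ[ℝ] ℝ, K ⟨1, h1⟩ = 1 ∧ (∀ f : V, 0 ≤ (f : X →ᵇ ℝ) → 0 ≤ K f) ∧
      ∀ (f : V) (s : X), K (T s f) = K f := by
  have hb : ∀ (L : V →ₗ[ℝ] ℝ), L ⟨1, h1⟩ = 1 → (∀ f : V, 0 ≤ (f : X →ᵇ ℝ) → 0 ≤ L f) →
      ∀ f : V, |L f| ≤ ‖f‖ := by
    intro L hL hp f
    have e1 : 0 ≤ L (‖f‖ • (⟨1, h1⟩ : V) + (-1 : ℝ) • f) := by
      apply hp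
      intro x
      have := (le_abs_self _).trans ((f : X →ᵇ ℝ).norm_coe_le_norm x)
      have h2 : 0 ≤ ‖(f : X →ᵇ ℝ)‖ * 1 + (-1) * (f : X →ᵇ ℝ) x := by linarith
      exact h2
    have e2 : 0 ≤ L (‖f‖ • (⟨1, h1⟩ : V) + f) := by
      apply hp
      intro x
      have := (neg_le_abs _).trans ((f : X →ᵇ ℝ).norm_coe_le_norm x)
      have h2 : 0 ≤ ‖(f : X →ᵇ ℝ)‖ + (f : X →ᵇ ℝ) x := by linarith
      simpa using h2
    rw [LinearMap.map_add, LinearMap.map_smul, LinearMap.map_smul, hL] at e1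
    rw [LinearMap.map_add, LinearMap.map_smul, hL] at e2
    simp only [smul_eq_mul, mul_one] at e1 e2
    rw [abs_le]
    constructor <;> linarith
  have hne : (⨅ α, 𝓟 {β | A α ⊆ A β}).NeBot := by
    apply iInf_neBot_of_directed'
    · intro a b
      obtain ⟨c, hc⟩ := hdir a b
      refine ⟨c, ?_, ?_⟩
      · exact principal_mono.2 fun β (hβ : A c ⊆ A β) =>
          (Set.subset_union_left.trans hc).trans hβ
      · exact principal_mono.2 fun β (hβ : A c ⊆ A β) =>
          (Set.subset_union_right.trans hc).trans hβ
    · intro a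
      exact principal_neBot_iff.2 ⟨a, Set.Subset.refl (A a)⟩
  let U : Ultrafilter ι := Ultrafilter.of (⨅ α, 𝓟 {β | A α ⊆ A β})
  have hU : ∀ α, ∀ᶠ β in (U : Filter ι), A α ⊆ A β := fun α =>
    (Ultrafilter.of_le _).trans (iInf_le _ α) (mem_principal_self _)
  have hlim : ∀ f : V, ∃ l : ℝ, Tendsto (fun α => J α f) (U : Filter ι) (𝓝 l) := by
    intro f
    obtain ⟨l, -, hl⟩ := (isCompact_Icc (a := -‖f‖) (b := ‖f‖)).ultrafilter_le_nhds
      (U.map fun α => J α f) (by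
        rw [le_principal_iff]
        exact Filter.Eventually.of_forall (f := (U : Filter ι)) fun α =>
          abs_le.1 (hb (J α) (hJ1 α) (hJp α) f))
    exact ⟨l, hl⟩
  choose k hk using hlim
  let K : V →ₗ[ℝ] ℝ :=
    { toFun := k
      map_add' := fun f g => tendsto_nhds_unique (hk (f + g)) (by
        simpa using (hk f).add (hk g))
      map_smul' := fun r f => tendsto_nhds_unique (hk (r • f)) (by
        simpa using (hk f).const_mul r) }
  have hK1 : K ⟨1, h1⟩ = 1 := tendsto_nhds_unique (hk ⟨1, h1⟩) (by simp [hJ1])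
  have hKp : ∀ f : V, 0 ≤ (f : X →ᵇ ℝ) → 0 ≤ K f := fun f hf =>
    ge_of_tendsto (hk f) (Eventually.of_forall fun α => hJp α f hf)
  refine ⟨K, hK1, hKp, fun f => ?_⟩
  have hc : Continuous K :=
    AddMonoidHomClass.continuous_of_bound K 1 fun f => by
      simpa using hb K hK1 hKp f
  have := Continuous.ext_on hdense (hc.comp (hT f)) (continuous_const (y := K f)) (by
    intro s hs
    obtain ⟨α, hα⟩ := Set.mem_iUnion.1 hs
    refine tendsto_nhds_unique (hk (T s f)) ((hk f).congr' ?_)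
    filter_upwards [hU α] with β hβ
    exact (hJi β f s (hβ hα)).symm)
  exact fun s => congrFun this s

/-- Restriction to a subsemigroup. -/
def restr {S : Type*} [Semigroup S] [TopologicalSpace S] (B : Subsemigroup S) :
    (S →ᵇ ℝ) →ₗ[ℝ] (B →ᵇ ℝ) where
  toFun f := f.compContinuous ⟨Subtype.val, continuous_subtype_val⟩
  map_add' _ _ := rfl
  map_smul' _ _ := rfl

lemma continuous_restr {S : Type*} [Semigroup S] [TopologicalSpace S] (B : Subsemigroup S) :
    Continuous (restr B) :=
  BoundedContinuousFunction.continuous_compContinuous _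

lemma restr_LUC {S : Type*} [Semigroup S] [TopologicalSpace S] [ContinuousMul S]
    (B : Subsemigroup S) (f : S →ᵇ ℝ) (hf : f ∈ LUC S) : restr B f ∈ LUC B :=
  (continuous_restr B).comp ((mem_LUC_iff.1 hf).comp continuous_subtype_val)

lemma restr_RUC {S : Type*} [Semigroup S] [TopologicalSpace S] [ContinuousMul S]
    (B : Subsemigroup S) (f : S →ᵇ ℝ) (hf : f ∈ RUC S) : restr B f ∈ RUC B :=
  (continuous_restr B).comp ((mem_RUC_iff.1 hf).comp continuous_subtype_val)

/-- Proposition 4.7: a topological semigroup with identity covered densely by a directed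
family of amenable subsemigroups (each containing the identity) is amenable. -/
theorem amenable_of_directed_dense_union_amenable
    {S : Type*} [Monoid S] [TopologicalSpace S] [ContinuousMul S]
    {ι : Type*} (A : ι → Subsemigroup S)
    (hone : ∀ α, (1 : S) ∈ A α)
    (hdense : Dense (⋃ α, (A α : Set S)))
    (hamen : ∀ α, Amenable ↥(A α))
    (hdir : ∀ α₁ α₂, ∃ α₃, (A α₁ : Set S) ∪ (A α₂ : Set S) ⊆ (A α₃ : Set S)) :
    Amenable S := by
  have hι : Nonempty ι := by
    obtain ⟨x, hx⟩ := hdense.nonempty_iff.2 ⟨(1 : S)⟩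
    obtain ⟨α, -⟩ := Set.mem_iUnion.1 hx
    exact ⟨α⟩
  constructor
  · choose I hI using fun α => (hamen α).1
    obtain ⟨K, h1, h2, h3⟩ := limit_mean (LUC S) one_mem_LUC
      (fun s f => ⟨lTrans f.1 s, lTrans_mem f.2 s⟩)
      (fun f => Continuous.subtype_mk f.2 _) (fun α => (A α : Set S)) hdense hdir
      (fun α => (I α).comp ((restr (A α)).restrict (restr_LUC (A α))))
      (fun α => (hI α).1)
      (fun α f hf => (hI α).2.1 _ fun x => hf x.1)
      (fun α f s hs => (hI α).2.2 _ (restr_LUC (A α) _ f.2) ⟨s, hs⟩)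
    exact ⟨K, h1, h2, fun f hf s => h3 ⟨f, hf⟩ s⟩
  · choose I hI using fun α => (hamen α).2
    obtain ⟨K, h1, h2, h3⟩ := limit_mean (RUC S) one_mem_RUC
      (fun s f => ⟨rTrans f.1 s, rTrans_mem f.2 s⟩)
      (fun f => Continuous.subtype_mk f.2 _) (fun α => (A α : Set S)) hdense hdir
      (fun α => (I α).comp ((restr (A α)).restrict (restr_RUC (A α))))
      (fun α => (hI α).1)
      (fun α f hf => (hI α).2.1 _ fun x => hf x.1)
      (fun α f s hs => (hI α).2.2 _ (restr_RUC (A α) _ f.2) ⟨s, hs⟩)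
    exact ⟨K, h1, h2, fun f hf s => h3 ⟨f, hf⟩ s⟩


end Paper
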